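/- Let f(z) = Σ_{k≥0} a_k z^k be analytic in D_R, let s ≥ 0 and p ≥ s+1 be integers, and suppose f is (s,p)-valent in D_R. Then the lower s-truncation f̂(z) = Σ_{k≥1} a_{s+k} z^k is (p−s)-valent in D_R, i.e., for every c ∈ ℂ the equation f̂(z) = c has at most p − s solutions in D_R, counted with multiplicity. -/

import Mathlib

-- The order of vanishing of `g` at `z` (zero if `g` is not analytic at `z`).
open scoped Classical in
noncomputable def ordAt (g : ℂ → ℂ) (z : ℂ) : ℕ∞ :=
  if h : AnalyticAt ℂ g z then analyticOrderAt g z else 0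

/-- The number of zeroes of `g` in `Ω`, counted with multiplicity. -/
noncomputable def solCount (g : ℂ → ℂ) (Ω : Set ℂ) : ℕ∞ :=
  ∑' z : Ω, ordAt g z

/-- `f` is `(s,p)`-valent in `Ω`: for every polynomial `P` of degree at most `s`,
the equation `f = P` has at most `p` solutions in `Ω`, counted with multiplicity. -/
def IsSPValentOn (f : ℂ → ℂ) (Ω : Set ℂ) (s p : ℕ) : Prop :=
  ∀ P : Polynomial ℂ, P.degree ≤ (s : ℕ) →
    solCount (fun z => f z - P.eval z) Ω ≤ (p : ℕ∞)

/-- `g` is `p`-valent in `Ω`: for every constant `c`, the equation `g = c` has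
at most `p` solutions in `Ω`, counted with multiplicity. -/
def IsPValentOn (g : ℂ → ℂ) (Ω : Set ℂ) (p : ℕ) : Prop :=
  ∀ c : ℂ, solCount (fun z => g z - c) Ω ≤ (p : ℕ∞)

/-!
Subtracting the polynomial `∑_{k ≤ s} a_k z^k + c z^s` from `f` leaves `z^s (f̂ - c)`. Its zeros are
those of `f̂ - c` together with `s` zeros at the origin, and there are at most `p` in total.
-/

open Set Polynomial

section Series

theorem summable_of_canonicallyOrderedAdd {ι α : Type*} [CompleteLinearOrder α] [AddCommMonoid α]
    [CanonicallyOrderedAdd α] [TopologicalSpace α] [OrderTopology α]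
    (u : ι → α) : Summable u :=
  (hasSum_of_isLUB _ isLUB_iSup).summable

theorem analyticOnNhd_ball_of_hasSum {𝕜 : Type*} [RCLike 𝕜] {b : ℕ → 𝕜} {g : 𝕜 → 𝕜} {z₀ : 𝕜}
    {R : ℝ} (hg : ∀ z ∈ Metric.ball z₀ R, HasSum (fun k => b k * (z - z₀) ^ k) (g z)) :
    AnalyticOnNhd 𝕜 g (Metric.ball z₀ R) := by
  intro z hz
  have hR : 0 < R := Metric.pos_of_mem_ball hz
  suffices HasFPowerSeriesOnBall g (.ofScalars 𝕜 b) z₀ (ENNReal.ofReal R) from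
    this.analyticAt_of_mem (by rwa [Metric.eball_ofReal])
  refine ⟨ENNReal.le_of_forall_nnreal_lt fun r hr => ?_, ENNReal.ofReal_pos.2 hR, fun {y} hy => ?_⟩
  · have hrR : (r : ℝ) < R := ENNReal.toReal_lt_of_lt_ofReal hr
    have hsum : Summable fun k => b k * ((r : ℝ) : 𝕜) ^ k := by
      simpa using (hg (z₀ + ((r : ℝ) : 𝕜)) (by simpa using hrR)).summable
    refine FormalMultilinearSeries.le_radius_of_tendsto _ (l := 0) ?_
    simpa using hsum.tendsto_atTop_zero.norm
  · rw [Metric.eball_ofReal] at hy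
    simpa [mul_comm] using hg (z₀ + y) (by simpa using hy)

theorem eq_eval_trunc_add_pow_mul {A : Type*} [CommRing A] [TopologicalSpace A]
    [IsTopologicalRing A] [T2Space A] {a : ℕ → A} {s : ℕ} {w y t : A}
    (hy : HasSum (fun k => a k * w ^ k) y)
    (ht : HasSum (fun k => a (s + (k + 1)) * w ^ (k + 1)) t) :
    y = ((PowerSeries.mk a).trunc (s + 1)).eval w + w ^ s * t := by
  have htail : HasSum (fun k => a (k + (s + 1)) * w ^ (k + (s + 1))) (w ^ s * t) := by
    convert! ht.mul_left (w ^ s) using 2 with k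
    rw [show k + (s + 1) = s + (k + 1) by ring]
    ring
  have hsum := (hasSum_nat_add_iff (f := fun k => a k * w ^ k) (s + 1)).1 htail
  rw [hy.unique hsum, add_comm, eval, PowerSeries.eval₂_trunc_eq_sum_range]
  simp

end Series

section ZeroCount

variable {g h : ℂ → ℂ} {Ω : Set ℂ} {z z₀ : ℂ}

theorem ordAt_eq_analyticOrderAt (g : ℂ → ℂ) (z : ℂ) : ordAt g z = analyticOrderAt g z := by
  by_cases hg : AnalyticAt ℂ g z
  · exact dif_pos hg
  · rw [analyticOrderAt_of_not_analyticAt hg]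
    exact dif_neg hg

theorem ordAt_sub_pow (n : ℕ) :
    ordAt (fun w => (w - z₀) ^ n) z = if z = z₀ then (n : ℕ∞) else 0 := by
  rw [ordAt_eq_analyticOrderAt]
  split_ifs with hz
  · subst hz
    exact analyticOrderAt_centeredMonomial
  · exact analyticOrderAt_eq_zero.2 (.inr (pow_ne_zero n (sub_ne_zero.2 hz)))

theorem solCount_congr (hΩ : IsOpen Ω) (hgh : EqOn g h Ω) : solCount g Ω = solCount h Ω := by
  simp only [solCount, ordAt_eq_analyticOrderAt]
  exact tsum_congr fun z => analyticOrderAt_congr (hgh.eventuallyEq_of_mem (hΩ.mem_nhds z.2))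

theorem solCount_mul (hg : AnalyticOnNhd ℂ g Ω) (hh : AnalyticOnNhd ℂ h Ω) :
    solCount (g * h) Ω = solCount g Ω + solCount h Ω := by
  simp only [solCount, ordAt_eq_analyticOrderAt]
  rw [← (summable_of_canonicallyOrderedAdd _).tsum_add (summable_of_canonicallyOrderedAdd _)]
  exact tsum_congr fun z => analyticOrderAt_mul (hg z z.2) (hh z z.2)

theorem solCount_sub_pow (hz₀ : z₀ ∈ Ω) (n : ℕ) : solCount (fun z => (z - z₀) ^ n) Ω = n := by
  calc solCount (fun z => (z - z₀) ^ n) Ω = ∑' z : Ω, if z = ⟨z₀, hz₀⟩ then (n : ℕ∞) else 0 :=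
        tsum_congr fun z => by rw [ordAt_sub_pow]; simp only [Subtype.ext_iff]
    _ = n := tsum_ite_eq _ _

end ZeroCount

theorem IsSPValentOn.isPValentOn_of_eqOn {f g : ℂ → ℂ} {Ω : Set ℂ} {z₀ : ℂ} {s p : ℕ} {Q : ℂ[X]}
    (hf : IsSPValentOn f Ω s p) (hΩ : IsOpen Ω) (hz₀ : z₀ ∈ Ω) (hg : AnalyticOnNhd ℂ g Ω)
    (hQ : Q.degree ≤ s) (hfg : EqOn f (fun z => Q.eval z + (z - z₀) ^ s * g z) Ω) :
    IsPValentOn g Ω (p - s) := by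
  intro c
  let P : ℂ[X] := Q + C c * (X - C z₀) ^ s
  have hP : P.degree ≤ s := by
    refine degree_add_le_of_degree_le hQ ?_
    compute_degree!
  have hfactor : EqOn (fun z => f z - P.eval z)
      ((fun z => (z - z₀) ^ s) * fun z => g z - c) Ω := by
    intro z hz
    simp only [P, hfg hz, Pi.mul_apply, eval_add, eval_mul, eval_pow, eval_sub, eval_C, eval_X]
    ring
  have hcount : (s : ℕ∞) + solCount (fun z => g z - c) Ω ≤ p := by
    calc (s : ℕ∞) + solCount (fun z => g z - c) Ω
        = solCount ((fun z => (z - z₀) ^ s) * fun z => g z - c) Ω := by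
          rw [solCount_mul (h := fun z => g z - c) (fun z _ => by fun_prop)
            (hg.sub analyticOnNhd_const), solCount_sub_pow hz₀]
      _ = solCount (fun z => f z - P.eval z) Ω := (solCount_congr hΩ hfactor).symm
      _ ≤ p := hf P hP
  rw [ENat.natCast_sub]
  exact (ENat.addLECancellable_natCast s).le_tsub_of_add_le_left hcount

/-- If `f(z) = ∑ a_k z^k` is `(s,p)`-valent in `D_R` (with `p ≥ s + 1`), then its lower
`s`-truncation `f̂(z) = ∑_{k ≥ 1} a_{s+k} z^k` is `(p - s)`-valent in `D_R`. -/
theorem statement2 (R : ℝ) (hR : 0 < R) (a : ℕ → ℂ) (f fhat : ℂ → ℂ) (s p : ℕ)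
    (hp : s + 1 ≤ p)
    (hf : ∀ z ∈ Metric.ball (0 : ℂ) R, HasSum (fun k => a k * z ^ k) (f z))
    (hfhat : ∀ z ∈ Metric.ball (0 : ℂ) R,
      HasSum (fun k => a (s + (k + 1)) * z ^ (k + 1)) (fhat z))
    (hval : IsSPValentOn f (Metric.ball (0 : ℂ) R) s p) :
    IsPValentOn fhat (Metric.ball (0 : ℂ) R) (p - s) := by
  have hadd : AnalyticOnNhd ℂ (fun z => fhat z + a s) (Metric.ball 0 R) :=
    analyticOnNhd_ball_of_hasSum (b := fun k => a (s + k)) fun z hz => by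
      simpa using (hasSum_nat_add_iff (f := fun k => a (s + k) * z ^ k) 1).1 (hfhat z hz)
  have hana : AnalyticOnNhd ℂ fhat (Metric.ball 0 R) := by
    simpa [Pi.sub_def] using hadd.sub (analyticOnNhd_const (v := a s))
  have hdeg : ((PowerSeries.mk a).trunc (s + 1)).degree ≤ s :=
    degree_le_of_natDegree_le (Nat.le_of_lt_succ (PowerSeries.natDegree_trunc_lt _ s))
  exact hval.isPValentOn_of_eqOn Metric.isOpen_ball (Metric.mem_ball_self hR) hana hdeg
    fun z hz => by simpa only [sub_zero] using eq_eval_trunc_add_pow_mul (hf z hz) (hfhat z hz)
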